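/- Consider the 2-cycles closed-loop vector field F where u₁, u₅ : ℝ³ → ℝ are continuously differentiable with u₁(0,0,s) = u₅(0,0,s) = 0 for all s ∈ ℝ, and u₂, u₃, u₄ : ℝ → ℝ are differentiable with u₂(0) = u₃(0) = u₄(0) = 0. Let z⁰ = (z⁰₁,…,z⁰₅) ∈ (ℝ²)⁵ be a design equilibrium, i.e. eᵢ = z⁰ᵢ·z⁰ᵢ − dᵢ = 0 for all i, and set s₀ = z⁰₁·z⁰₅. Then F is differentiable at z⁰ and its Jacobian, as a 10×10 matrix, equals A_e^{(2)}·D(z')ᵀ·D(z⁰), where z'₁ = 2(∂₁u₁(0,0,s₀)·z⁰₁ + ∂₁u₅(0,0,s₀)·z⁰₅), z'₅ = 2(∂₂u₁(0,0,s₀)·z⁰₁ + ∂₂u₅(0,0,s₀)·z⁰₅), and z'ᵢ = 2uᵢ'(0)·z⁰ᵢ for i = 2,3,4 (∂₁, ∂₂ denoting partial derivatives in the first and second arguments). -/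

import Mathlib

open Matrix

/-- The edge-adjacency matrix of the 2-cycles. -/
def Ae : Matrix (Fin 5) (Fin 5) ℝ :=
  !![-1, 1, 0, 0, -1;
      0, -1, 1, 0, 0;
      1, 0, -1, 0, 1;
      0, 0, 1, -1, 0;
     -1, 0, 0, 1, -1]

/-- `A_e^{(2)} = A_e ⊗ I₂`, the Kronecker product with the 2×2 identity. -/
noncomputable def Ae2 : Matrix (Fin 5 × Fin 2) (Fin 5 × Fin 2) ℝ :=
  Matrix.kroneckerMap (· * ·) Ae (1 : Matrix (Fin 2) (Fin 2) ℝ)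

/-- `D(z)`: the 5×10 block-diagonal matrix whose `i`-th diagonal block is the row
vector `zᵢᵀ`. -/
def Dmat (z : Fin 5 → Fin 2 → ℝ) : Matrix (Fin 5) (Fin 5 × Fin 2) ℝ :=
  Matrix.of fun i p => if p.1 = i then z i p.2 else 0

/-- The closed-loop vector field of the 2-cycles formation in edge variables,
with the state encoded as a function `ζ : Fin 5 × Fin 2 → ℝ` (so `zᵢ = ζ(i, ·)`).
`u1, u5 : ℝ³ → ℝ` are the controls of agent 1 (evaluated at `(e₁, e₅, z₁·z₅)`) and
`u2, u3, u4 : ℝ → ℝ` those of the other agents (evaluated at `e₂, e₃, e₄`), where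
`eᵢ = zᵢ·zᵢ − dᵢ`. -/
noncomputable def twoCyclesF (d : Fin 5 → ℝ) (u1 u5 : ℝ × ℝ × ℝ → ℝ)
    (u2 u3 u4 : ℝ → ℝ) (ζ : Fin 5 × Fin 2 → ℝ) : Fin 5 × Fin 2 → ℝ := fun p =>
  let z : Fin 5 → Fin 2 → ℝ := fun i k => ζ (i, k)
  let e : Fin 5 → ℝ := fun j => z j ⬝ᵥ z j - d j
  let a : ℝ := u1 (e 0, e 4, z 0 ⬝ᵥ z 4)
  let b : ℝ := u5 (e 0, e 4, z 0 ⬝ᵥ z 4)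
  (![u2 (e 1) • z 1 - a • z 0 - b • z 4,
     u3 (e 2) • z 2 - u2 (e 1) • z 1,
     a • z 0 + b • z 4 - u3 (e 2) • z 2,
     u3 (e 2) • z 2 - u4 (e 3) • z 3,
     u4 (e 3) • z 3 - a • z 0 - b • z 4]) p.1 p.2

/-!
The vector field factors as `F = A_e^{(2)} D(z)ᵀ u(e, z₁·z₅)`. At a design equilibrium `u`
vanishes, so the product rule only differentiates `u`; since `u(0, ·) = 0` near `z₁·z₅`, only
`∂u/∂e` enters, and the Jacobian of the edge errors is `2 D(z)`. Hence the Jacobian of `F` is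
`A_e^{(2)} D(z)ᵀ (∂u/∂e) 2 D(z)`, and because columns 1 and 5 of `A_e` coincide,
`2 A_e^{(2)} D(z)ᵀ (∂u/∂e) = A_e^{(2)} D(z')ᵀ`.
-/

section Calculus

variable {𝕜 : Type*} [NontriviallyNormedField 𝕜]
  {E F G H : Type*} [NormedAddCommGroup E] [NormedSpace 𝕜 E] [NormedAddCommGroup F]
  [NormedSpace 𝕜 F] [NormedAddCommGroup G] [NormedSpace 𝕜 G] [NormedAddCommGroup H]
  [NormedSpace 𝕜 H]

lemma hasFDerivAt_smul_of_left_eq_zero {f : E → 𝕜} {g : E → F} {f' : E →L[𝕜] 𝕜} {x : E}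
    (hf : HasFDerivAt f f' x) (hg : DifferentiableAt 𝕜 g x) (hfx : f x = 0) :
    HasFDerivAt (fun y => f y • g y) (f'.smulRight (g x)) x := by
  refine (hf.fun_smul hg.hasFDerivAt).congr_fderiv ?_
  rw [hfx, zero_smul, zero_add]

lemma hasFDerivAt_comp_prodMk_of_eventuallyEq_const {U : F × G → H} {L : F →L[𝕜] H}
    {f : E → F} {f' : E →L[𝕜] F} {g : E → G} {x : E} {c : H}
    (hU : DifferentiableAt 𝕜 U (f x, g x))
    (hUleft : HasFDerivAt (fun y => U (y, g x)) L (f x))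
    (hUright : (fun t => U (f x, t)) =ᶠ[nhds (g x)] fun _ => c)
    (hf : HasFDerivAt f f' x) (hg : DifferentiableAt 𝕜 g x) :
    HasFDerivAt (fun y => U (f y, g y)) (L ∘L f') x := by
  have hinl : fderiv 𝕜 U (f x, g x) ∘L .inl 𝕜 F G = L :=
    (hU.hasFDerivAt.comp (f x) (hasFDerivAt_prodMk_left (f x) (g x))).unique hUleft
  have hinr : fderiv 𝕜 U (f x, g x) ∘L .inr 𝕜 F G = 0 :=
    (hU.hasFDerivAt.comp (g x) (hasFDerivAt_prodMk_right (f x) (g x))).unique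
      ((hasFDerivAt_const c (g x)).congr_of_eventuallyEq hUright)
  refine (hU.hasFDerivAt.comp x (hf.prodMk hg.hasFDerivAt)).congr_fderiv ?_
  rw [← ContinuousLinearMap.coprod_comp_inl_inr (fderiv 𝕜 U (f x, g x)), hinl, hinr]
  ext1 h
  simp

lemma hasFDerivAt_comp_pair {u : 𝕜 × 𝕜 × G → H} {f g : E → 𝕜} {f' g' : E →L[𝕜] 𝕜} {x : E}
    {s : G} (hu : DifferentiableAt 𝕜 u (f x, g x, s)) (hf : HasFDerivAt f f' x)
    (hg : HasFDerivAt g g' x) :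
    HasFDerivAt (fun y => u (f y, g y, s))
      (f'.smulRight (fderiv 𝕜 u (f x, g x, s) (1, 0, 0)) +
        g'.smulRight (fderiv 𝕜 u (f x, g x, s) (0, 1, 0))) x := by
  refine (hu.hasFDerivAt.comp x
    (hf.prodMk (hg.prodMk (hasFDerivAt_const s x)))).congr_fderiv ?_
  ext1 h
  have hsplit : ((f' h, g' h, 0) : 𝕜 × 𝕜 × G) = f' h • (1, 0, 0) + g' h • (0, 1, 0) := by simp
  change fderiv 𝕜 u (f x, g x, s) (f' h, g' h, 0) = _
  rw [hsplit, map_add, map_smul, map_smul]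
  rfl

end Calculus

section MulVec

variable {𝕜 : Type*} [NontriviallyNormedField 𝕜] [CompleteSpace 𝕜]
  {l m n : Type*} [Fintype n]

/-- The continuous linear map `v ↦ M *ᵥ v`, through which Jacobian matrices are read as
derivatives. -/
noncomputable def mulVecCLM (M : Matrix m n 𝕜) : (n → 𝕜) →L[𝕜] (m → 𝕜) :=
  LinearMap.toContinuousLinearMap M.mulVecLin

@[simp]
lemma mulVecCLM_apply (M : Matrix m n 𝕜) (v : n → 𝕜) : mulVecCLM M v = M *ᵥ v := rfl

lemma mulVecCLM_comp [Fintype m] (M : Matrix l m 𝕜) (N : Matrix m n 𝕜) :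
    mulVecCLM M ∘L mulVecCLM N = mulVecCLM (M * N) := by
  ext1 v
  simp only [ContinuousLinearMap.comp_apply, mulVecCLM_apply, mulVec_mulVec]

end MulVec

lemma Ae2_mulVec (w : Fin 5 × Fin 2 → ℝ) (p : Fin 5 × Fin 2) :
    (Ae2 *ᵥ w) p = ∑ j, Ae p.1 j * w (j, p.2) := by
  simp [Ae2, mulVec, dotProduct, Fintype.sum_prod_type, one_apply]

lemma Dmat_mulVec (z : Fin 5 → Fin 2 → ℝ) (h : Fin 5 × Fin 2 → ℝ) (i : Fin 5) :
    (Dmat z *ᵥ h) i = z i ⬝ᵥ fun k => h (i, k) := by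
  simp [Dmat, mulVec, dotProduct, Fintype.sum_prod_type]

lemma Dmat_transpose_mulVec (z : Fin 5 → Fin 2 → ℝ) (c : Fin 5 → ℝ) (p : Fin 5 × Fin 2) :
    ((Dmat z)ᵀ *ᵥ c) p = z p.1 p.2 * c p.1 := by
  simp [Dmat, mulVec, dotProduct]

/-- The edge errors `eᵢ = zᵢ·zᵢ − dᵢ` as a function of the state `ζ`, with `zᵢ = ζ(i, ·)`. -/
def edgeError (d : Fin 5 → ℝ) (ζ : Fin 5 × Fin 2 → ℝ) : Fin 5 → ℝ := fun i =>
  (fun k => ζ (i, k)) ⬝ᵥ (fun k => ζ (i, k)) - d i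

lemma hasFDerivAt_edgeError (d : Fin 5 → ℝ) (ζ : Fin 5 × Fin 2 → ℝ) :
    HasFDerivAt (edgeError d) (mulVecCLM ((2 : ℝ) • Dmat (Function.curry ζ))) ζ := by
  refine hasFDerivAt_pi'.2 fun i => ?_
  have hcoord (k : Fin 2) := hasFDerivAt_apply (𝕜 := ℝ) (i, k) ζ
  refine ((HasFDerivAt.fun_sum fun k _ => (hcoord k).fun_mul (hcoord k)).sub_const
    (d i)).congr_fderiv ?_
  ext1 h
  simp [smul_mulVec, Dmat_mulVec, dotProduct, ← two_mul, mul_add, Function.curry]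

lemma hasFDerivAt_Dmat_transpose_mulVec {c : (Fin 5 × Fin 2 → ℝ) → Fin 5 → ℝ}
    {c' : (Fin 5 × Fin 2 → ℝ) →L[ℝ] Fin 5 → ℝ} {ζ : Fin 5 × Fin 2 → ℝ}
    (hc : HasFDerivAt c c' ζ) (hcζ : c ζ = 0) :
    HasFDerivAt (fun η => (Dmat (Function.curry η))ᵀ *ᵥ c η)
      (mulVecCLM (Dmat (Function.curry ζ))ᵀ ∘L c') ζ := by
  refine hasFDerivAt_pi'.2 fun p => ?_
  simp only [Dmat_transpose_mulVec, mul_comm _ (c _ _), ← smul_eq_mul]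
  refine (hasFDerivAt_smul_of_left_eq_zero (hasFDerivAt_pi'.1 hc p.1)
    (differentiableAt_apply p ζ) (congrFun hcζ p.1)).congr_fderiv ?_
  ext1 h
  simp [Dmat_transpose_mulVec, Function.curry, mul_comm]

section Controls

variable (u1 u5 : ℝ × ℝ × ℝ → ℝ) (u2 u3 u4 : ℝ → ℝ)

/-- The control vector `(u₁, …, u₅)` as a function of the edge errors `e` and of the
inner product `s = z₁·z₅`. -/
def controls (q : (Fin 5 → ℝ) × ℝ) : Fin 5 → ℝ :=
  ![u1 (q.1 0, q.1 4, q.2), u2 (q.1 1), u3 (q.1 2), u4 (q.1 3), u5 (q.1 0, q.1 4, q.2)]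

/-- The matrix `(∂uᵢ/∂eⱼ)` of the controls at `e = 0` and `z₁·z₅ = s`. -/
noncomputable def controlJacobian (s : ℝ) : Matrix (Fin 5) (Fin 5) ℝ :=
  !![fderiv ℝ u1 (0, 0, s) (1, 0, 0), 0, 0, 0, fderiv ℝ u1 (0, 0, s) (0, 1, 0);
     0, deriv u2 0, 0, 0, 0;
     0, 0, deriv u3 0, 0, 0;
     0, 0, 0, deriv u4 0, 0;
     fderiv ℝ u5 (0, 0, s) (1, 0, 0), 0, 0, 0, fderiv ℝ u5 (0, 0, s) (0, 1, 0)]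

/-- The edge vectors `z'` of the linearization, as a function of `s = z₁·z₅` and of the
edge vectors `z` at which it is taken. -/
noncomputable def linearizedEdges (s : ℝ) (z : Fin 5 → Fin 2 → ℝ) : Fin 5 → Fin 2 → ℝ :=
  ![(2 * fderiv ℝ u1 (0, 0, s) (1, 0, 0)) • z 0 + (2 * fderiv ℝ u5 (0, 0, s) (1, 0, 0)) • z 4,
    (2 * deriv u2 0) • z 1,
    (2 * deriv u3 0) • z 2,
    (2 * deriv u4 0) • z 3,
    (2 * fderiv ℝ u1 (0, 0, s) (0, 1, 0)) • z 0 + (2 * fderiv ℝ u5 (0, 0, s) (0, 1, 0)) • z 4]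

lemma twoCyclesF_eq_mulVec (d : Fin 5 → ℝ) (ζ : Fin 5 × Fin 2 → ℝ) :
    twoCyclesF d u1 u5 u2 u3 u4 ζ = Ae2 *ᵥ ((Dmat (Function.curry ζ))ᵀ *ᵥ
      controls u1 u5 u2 u3 u4
        (edgeError d ζ, (fun k => ζ (0, k)) ⬝ᵥ fun k => ζ (4, k))) := by
  ext ⟨i, k⟩
  simp only [Ae2_mulVec, Dmat_transpose_mulVec, Fin.sum_univ_five]
  fin_cases i <;> simp [twoCyclesF, Ae, controls, edgeError, Function.curry] <;> ring

/-- Columns 1 and 5 of `A_e` agree (indices `0` and `4`), so the effects of an edge error on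
the forces along `z₁` (through `u₁`) and `z₅` (through `u₅`) add up in a single edge vector. -/
lemma Ae2_mul_Dmat_transpose_mul_controlJacobian (s : ℝ) (z : Fin 5 → Fin 2 → ℝ) :
    Ae2 * ((Dmat z)ᵀ * (controlJacobian u1 u5 u2 u3 u4 s * (2 : ℝ) • Dmat z)) =
      Ae2 * (Dmat (linearizedEdges u1 u5 u2 u3 u4 s z))ᵀ * Dmat z := by
  suffices h : Ae2 * ((Dmat z)ᵀ * ((2 : ℝ) • controlJacobian u1 u5 u2 u3 u4 s)) =
      Ae2 * (Dmat (linearizedEdges u1 u5 u2 u3 u4 s z))ᵀ by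
    rw [← h]
    simp only [Matrix.mul_assoc, Matrix.mul_smul, Matrix.smul_mul]
  refine ext_of_mulVec_single fun j => funext fun ⟨i, k⟩ => ?_
  simp only [← mulVec_mulVec, Ae2_mulVec, Dmat_transpose_mulVec, Fin.sum_univ_five]
  fin_cases i <;> fin_cases j <;>
    simp [Ae, controlJacobian, linearizedEdges] <;> ring

variable {u1 u5 u2 u3 u4} {s : ℝ}

lemma controls_zero_left_eventuallyEq
    (hu1 : ∀ᶠ t in nhds s, u1 (0, 0, t) = 0) (hu5 : ∀ᶠ t in nhds s, u5 (0, 0, t) = 0)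
    (hu2 : u2 0 = 0) (hu3 : u3 0 = 0) (hu4 : u4 0 = 0) :
    (fun t => controls u1 u5 u2 u3 u4 (0, t)) =ᶠ[nhds s] fun _ => 0 := by
  filter_upwards [hu1, hu5] with t h1 h5
  ext i
  fin_cases i <;> simp [controls, h1, h5, hu2, hu3, hu4]

lemma differentiableAt_controls (hu1 : DifferentiableAt ℝ u1 (0, 0, s))
    (hu5 : DifferentiableAt ℝ u5 (0, 0, s)) (hu2 : DifferentiableAt ℝ u2 0)
    (hu3 : DifferentiableAt ℝ u3 0) (hu4 : DifferentiableAt ℝ u4 0) :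
    DifferentiableAt ℝ (controls u1 u5 u2 u3 u4) (0, s) := by
  refine differentiableAt_pi.2 fun i => ?_
  fin_cases i
  · exact hu1.comp (f := fun q : (Fin 5 → ℝ) × ℝ => (q.1 0, q.1 4, q.2)) _ (by fun_prop)
  · exact hu2.comp (f := fun q : (Fin 5 → ℝ) × ℝ => q.1 1) _ (by fun_prop)
  · exact hu3.comp (f := fun q : (Fin 5 → ℝ) × ℝ => q.1 2) _ (by fun_prop)
  · exact hu4.comp (f := fun q : (Fin 5 → ℝ) × ℝ => q.1 3) _ (by fun_prop)
  · exact hu5.comp (f := fun q : (Fin 5 → ℝ) × ℝ => (q.1 0, q.1 4, q.2)) _ (by fun_prop)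

lemma hasFDerivAt_controls_left (hu1 : DifferentiableAt ℝ u1 (0, 0, s))
    (hu5 : DifferentiableAt ℝ u5 (0, 0, s)) (hu2 : DifferentiableAt ℝ u2 0)
    (hu3 : DifferentiableAt ℝ u3 0) (hu4 : DifferentiableAt ℝ u4 0) :
    HasFDerivAt (fun e => controls u1 u5 u2 u3 u4 (e, s))
      (mulVecCLM (controlJacobian u1 u5 u2 u3 u4 s)) 0 := by
  have hcoord (j : Fin 5) := hasFDerivAt_apply (𝕜 := ℝ) j (0 : Fin 5 → ℝ)
  have hpair {u : ℝ × ℝ × ℝ → ℝ} (hu : DifferentiableAt ℝ u (0, 0, s)) :=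
    hasFDerivAt_comp_pair (f := fun e : Fin 5 → ℝ => e 0) (g := fun e => e 4) hu
      (hcoord 0) (hcoord 4)
  have hsingle {u : ℝ → ℝ} (hu : DifferentiableAt ℝ u 0) (j : Fin 5) :=
    hu.hasDerivAt.comp_hasFDerivAt (f := fun e : Fin 5 → ℝ => e j) 0 (hcoord j)
  refine hasFDerivAt_pi'.2 fun i => ?_
  fin_cases i <;> [
    refine (hpair hu1).congr_fderiv ?_;
    refine (hsingle hu2 1).congr_fderiv ?_;
    refine (hsingle hu3 2).congr_fderiv ?_;
    refine (hsingle hu4 3).congr_fderiv ?_;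
    refine (hpair hu5).congr_fderiv ?_]
  all_goals
    ext1 h
    simp [controlJacobian, dotProduct, Fin.sum_univ_five, mul_comm]

end Controls

theorem jacobian_twoCyclesF_at_design_equilibrium_general {d : Fin 5 → ℝ}
    {u1 u5 : ℝ × ℝ × ℝ → ℝ} {u2 u3 u4 : ℝ → ℝ} {ζ : Fin 5 × Fin 2 → ℝ} {s : ℝ}
    (hs : (fun k => ζ (0, k)) ⬝ᵥ (fun k => ζ (4, k)) = s)
    (hdes : ∀ i : Fin 5, (fun k => ζ (i, k)) ⬝ᵥ (fun k => ζ (i, k)) = d i)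
    (hu1 : DifferentiableAt ℝ u1 (0, 0, s)) (hu5 : DifferentiableAt ℝ u5 (0, 0, s))
    (hu2 : DifferentiableAt ℝ u2 0) (hu3 : DifferentiableAt ℝ u3 0)
    (hu4 : DifferentiableAt ℝ u4 0)
    (hu10 : ∀ᶠ t in nhds s, u1 (0, 0, t) = 0) (hu50 : ∀ᶠ t in nhds s, u5 (0, 0, t) = 0)
    (hu20 : u2 0 = 0) (hu30 : u3 0 = 0) (hu40 : u4 0 = 0) :
    HasFDerivAt (twoCyclesF d u1 u5 u2 u3 u4)
      (mulVecCLM (Ae2 * (Dmat (linearizedEdges u1 u5 u2 u3 u4 s (Function.curry ζ)))ᵀ *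
        Dmat (Function.curry ζ))) ζ := by
  subst hs
  have he : edgeError d ζ = 0 := funext fun i => sub_eq_zero.2 (hdes i)
  have hu0 := controls_zero_left_eventuallyEq hu10 hu50 hu20 hu30 hu40
  have hdot : DifferentiableAt ℝ
      (fun η : Fin 5 × Fin 2 → ℝ => (fun k => η (0, k)) ⬝ᵥ fun k => η (4, k)) ζ := by
    simp only [dotProduct]
    fun_prop
  have hcontrols := hasFDerivAt_comp_prodMk_of_eventuallyEq_const
    (he ▸ differentiableAt_controls hu1 hu5 hu2 hu3 hu4)
    (he ▸ hasFDerivAt_controls_left hu1 hu5 hu2 hu3 hu4)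
    (he ▸ hu0) (hasFDerivAt_edgeError d ζ) hdot
  have hF := (mulVecCLM Ae2).hasFDerivAt.comp ζ
    (hasFDerivAt_Dmat_transpose_mulVec hcontrols (he ▸ hu0.eq_of_nhds))
  rw [mulVecCLM_comp, mulVecCLM_comp, mulVecCLM_comp,
    Ae2_mul_Dmat_transpose_mul_controlJacobian] at hF
  exact hF.congr_of_eventuallyEq (.of_forall (twoCyclesF_eq_mulVec u1 u5 u2 u3 u4 d))

/-- At a design equilibrium `z⁰` (all edge errors zero) of the 2-cycles with
compatible controls, the Jacobian of the closed-loop vector field `F` is the 10×10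
matrix `A_e^{(2)}·D(z')ᵀ·D(z⁰)`, where
`z'₁ = 2(∂₁u₁(0,0,s₀)·z⁰₁ + ∂₁u₅(0,0,s₀)·z⁰₅)`,
`z'₅ = 2(∂₂u₁(0,0,s₀)·z⁰₁ + ∂₂u₅(0,0,s₀)·z⁰₅)`,
`z'ᵢ = 2uᵢ'(0)·z⁰ᵢ` for `i = 2,3,4`, and `s₀ = z⁰₁·z⁰₅`. -/
theorem jacobian_twoCyclesF_at_design_equilibrium (d : Fin 5 → ℝ)
    (u1 u5 : ℝ × ℝ × ℝ → ℝ) (u2 u3 u4 : ℝ → ℝ)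
    (hu1 : ContDiff ℝ 1 u1) (hu5 : ContDiff ℝ 1 u5)
    (hu10 : ∀ s : ℝ, u1 (0, 0, s) = 0) (hu50 : ∀ s : ℝ, u5 (0, 0, s) = 0)
    (hu2 : Differentiable ℝ u2) (hu3 : Differentiable ℝ u3)
    (hu4 : Differentiable ℝ u4)
    (hu20 : u2 0 = 0) (hu30 : u3 0 = 0) (hu40 : u4 0 = 0)
    (ζ0 : Fin 5 × Fin 2 → ℝ)
    (hdes : ∀ i : Fin 5, (fun k => ζ0 (i, k)) ⬝ᵥ (fun k => ζ0 (i, k)) = d i) :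
    let z0 : Fin 5 → Fin 2 → ℝ := fun i k => ζ0 (i, k)
    let s0 : ℝ := z0 0 ⬝ᵥ z0 4
    let z' : Fin 5 → Fin 2 → ℝ :=
      ![(2 * fderiv ℝ u1 (0, 0, s0) (1, 0, 0)) • z0 0
          + (2 * fderiv ℝ u5 (0, 0, s0) (1, 0, 0)) • z0 4,
        (2 * deriv u2 0) • z0 1,
        (2 * deriv u3 0) • z0 2,
        (2 * deriv u4 0) • z0 3,
        (2 * fderiv ℝ u1 (0, 0, s0) (0, 1, 0)) • z0 0
          + (2 * fderiv ℝ u5 (0, 0, s0) (0, 1, 0)) • z0 4]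
    HasFDerivAt (twoCyclesF d u1 u5 u2 u3 u4)
      (LinearMap.toContinuousLinearMap ((Ae2 * (Dmat z')ᵀ * Dmat z0).mulVecLin)) ζ0 := by
  intro _ _ _
  exact jacobian_twoCyclesF_at_design_equilibrium_general rfl hdes
    (hu1.differentiable one_ne_zero _) (hu5.differentiable one_ne_zero _) (hu2 0) (hu3 0) (hu4 0)
    (.of_forall hu10) (.of_forall hu50) hu20 hu30 hu40
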